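/- Let q > 1 and t ≥ 0 be real numbers, set p_i := 1 - q^{-i} for integers i ≥ 1, let ε := ∏_{i=1}^∞ p_i and P := ∏_{i=1}^∞ (1 + q^i t)^{q^{-i}} (both infinite products converge). Let N > 0, let (a_j)_{j≥1} be a sequence of nonnegative real numbers with a_1 > 0 satisfying a_{j+1} ≤ (1 + q^j t)^{q^{-j}} · N^{q^{-j}} · a_j^{p_j} for every j ≥ 1, and suppose a_j converges to a limit L as j → ∞. Then L ≤ P · N^{1-ε} · a_1^{ε}. -/

import Mathlib

/-!
Iterating the recursion `n` times from `a 1` gives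
`a (n + 1) ≤ F n * N ^ (1 - E n) * a 1 ^ E n`, where `E n` and `F n` are the `n`-th partial products
of `ε` and `P`: the exponents of `N` and `a 1` combine exactly, and the extra power `F n ^ p` with
`p ∈ [0, 1]` is bounded by `F n` because every factor of `P` is at least `1`. The claim follows
by letting `n → ∞`. The product `ε` converges because `∑ q⁻ⁱ` does, and `P` converges because
`log ((1 + qⁱ t)^{q⁻ⁱ}) ≤ q⁻ⁱ (log (1 + t) + i log q)` is summable.
-/

theorem multipliable_eps (q : ℝ) (hq : 1 < q) :
    Multipliable (fun i : ℕ => 1 - (q ^ (i + 1))⁻¹) := by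
  have hs : Summable (fun i : ℕ => -(q ^ (i + 1))⁻¹) := by
    have h := summable_geometric_of_lt_one (inv_nonneg.2 (by linarith : (0:ℝ) ≤ q))
      (inv_lt_one_of_one_lt₀ hq)
    simpa only [inv_pow] using ((summable_nat_add_iff 1).2 h).neg
  simpa only [sub_eq_add_neg] using Real.multipliable_one_add_of_summable hs

theorem multipliable_P (q t : ℝ) (hq : 1 < q) (ht : 0 ≤ t) :
    Multipliable (fun i : ℕ => (1 + q ^ (i + 1) * t) ^ (q ^ (i + 1))⁻¹) := by
  have hq0 : 0 < q := by linarith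
  have hbase : ∀ i : ℕ, 1 ≤ 1 + q ^ i * t := fun i => by
    have : 0 ≤ q ^ i * t := by positivity
    linarith
  apply Real.multipliable_of_summable_log
  · intro i
    exact Real.rpow_pos_of_pos (by linarith [hbase (i + 1)]) _
  have hr1 : q⁻¹ < 1 := inv_lt_one_of_one_lt₀ hq
  have hr0 : 0 ≤ q⁻¹ := by positivity
  have hg := summable_geometric_of_lt_one hr0 hr1
  have hg' : Summable (fun i : ℕ => (i : ℝ) ^ 1 * q⁻¹ ^ i) :=
    summable_pow_mul_geometric_of_norm_lt_one 1
      (by rwa [Real.norm_of_nonneg hr0])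
  have hsum := (summable_nat_add_iff 1).2
    ((hg.mul_left (Real.log (1 + t))).add (hg'.mul_left (Real.log q)))
  refine Summable.of_nonneg_of_le (fun i => ?_) (fun i => ?_) hsum
  · exact Real.log_nonneg (Real.one_le_rpow (hbase _) (by positivity))
  · rw [Real.log_rpow (by linarith [hbase (i + 1)])]
    have hle : Real.log (1 + q ^ (i + 1) * t) ≤ Real.log (1 + t) + (i + 1 : ℕ) * Real.log q := by
      rw [← Real.log_pow, ← Real.log_mul (by positivity) (by positivity)]
      apply Real.log_le_log (by linarith [hbase (i + 1)])
      have : 1 ≤ q ^ (i + 1) := one_le_pow₀ hq.le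
      linarith
    calc (q ^ (i + 1))⁻¹ * Real.log (1 + q ^ (i + 1) * t)
        ≤ (q ^ (i + 1))⁻¹ * (Real.log (1 + t) + (i + 1 : ℕ) * Real.log q) := by gcongr
      _ = _ := by rw [inv_pow]; ring

/-- The bound obtained after `n` steps of the recursion, with partial products in place of
`ε` and `P`. -/
theorem iterate_bound (q t N : ℝ) (hq : 1 < q) (ht : 0 ≤ t) (hN : 0 < N)
    (a : ℕ → ℝ) (ha : ∀ j, 0 ≤ a j) (ha1 : 0 < a 1)
    (hrec : ∀ j, 1 ≤ j →
      a (j + 1) ≤ (1 + q ^ j * t) ^ (q ^ j)⁻¹ * N ^ (q ^ j)⁻¹ * a j ^ (1 - (q ^ j)⁻¹)) (n : ℕ) :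
    a (n + 1) ≤ (∏ i ∈ Finset.range n, (1 + q ^ (i + 1) * t) ^ (q ^ (i + 1))⁻¹) *
      N ^ (1 - ∏ i ∈ Finset.range n, (1 - (q ^ (i + 1))⁻¹)) *
      a 1 ^ (∏ i ∈ Finset.range n, (1 - (q ^ (i + 1))⁻¹)) := by
  have hq0 : 0 < q := by linarith
  induction n with
  | zero => simp
  | succ n ih =>
    rw [Finset.prod_range_succ, Finset.prod_range_succ]
    have hF : 1 ≤ ∏ i ∈ Finset.range n, (1 + q ^ (i + 1) * t) ^ (q ^ (i + 1))⁻¹ := by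
      refine Finset.one_le_prod fun i _ => Real.one_le_rpow ?_ (by positivity)
      have : 0 ≤ q ^ (i + 1) * t := by positivity
      linarith
    set F := ∏ i ∈ Finset.range n, (1 + q ^ (i + 1) * t) ^ (q ^ (i + 1))⁻¹
    set E := ∏ i ∈ Finset.range n, (1 - (q ^ (i + 1))⁻¹)
    have hf : 0 ≤ (1 + q ^ (n + 1) * t) ^ (q ^ (n + 1))⁻¹ := by positivity
    have hs0 : 0 ≤ (q ^ (n + 1))⁻¹ := by positivity
    have hs1 : (q ^ (n + 1))⁻¹ ≤ 1 := inv_le_one_of_one_le₀ (one_le_pow₀ hq.le)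
    have h := hrec (n + 1) (by omega)
    set f := (1 + q ^ (n + 1) * t) ^ (q ^ (n + 1))⁻¹
    set s := (q ^ (n + 1))⁻¹
    have hF0 : 0 ≤ F := by linarith
    have hp : 0 ≤ 1 - s := by linarith
    have hFp : F ^ (1 - s) ≤ F := by
      simpa using Real.rpow_le_rpow_of_exponent_le hF (by linarith : 1 - s ≤ 1)
    calc a (n + 1 + 1) ≤ f * N ^ s * a (n + 1) ^ (1 - s) := h
      _ ≤ f * N ^ s * (F * N ^ (1 - E) * a 1 ^ E) ^ (1 - s) := by
        gcongr
        exact ha _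
      _ = f * N ^ s * (F ^ (1 - s) * N ^ ((1 - E) * (1 - s)) * a 1 ^ (E * (1 - s))) := by
        rw [Real.mul_rpow (by positivity) (by positivity), Real.mul_rpow hF0 (by positivity),
          ← Real.rpow_mul hN.le, ← Real.rpow_mul ha1.le]
      _ ≤ f * N ^ s * (F * N ^ ((1 - E) * (1 - s)) * a 1 ^ (E * (1 - s))) := by gcongr
      _ = F * f * N ^ (1 - E * (1 - s)) * a 1 ^ (E * (1 - s)) := by
        rw [show 1 - E * (1 - s) = s + (1 - E) * (1 - s) by ring, Real.rpow_add hN]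
        ring

/-- Limiting step of the Moser iteration: with `p_i = 1 - q⁻ⁱ`,
`ε = ∏_{i=1}^∞ p_i` and `P = ∏_{i=1}^∞ (1 + qⁱ t)^{q⁻ⁱ}` (both products converge),
if the nonnegative sequence `a` satisfies the recursion and converges to `L`,
then `L ≤ P · N^{1-ε} · a_1^ε`. -/
theorem stmt_4 (q t N : ℝ) (hq : 1 < q) (ht : 0 ≤ t) (hN : 0 < N)
    (a : ℕ → ℝ) (ha : ∀ j, 0 ≤ a j) (ha1 : 0 < a 1)
    (hrec : ∀ j, 1 ≤ j →
      a (j + 1) ≤ (1 + q ^ j * t) ^ (q ^ j)⁻¹ * N ^ (q ^ j)⁻¹ * a j ^ (1 - (q ^ j)⁻¹))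
    (L : ℝ) (hL : Filter.Tendsto a Filter.atTop (nhds L)) :
    Multipliable (fun i : ℕ => 1 - (q ^ (i + 1))⁻¹) ∧
    Multipliable (fun i : ℕ => (1 + q ^ (i + 1) * t) ^ (q ^ (i + 1))⁻¹) ∧
    L ≤ (∏' i : ℕ, (1 + q ^ (i + 1) * t) ^ (q ^ (i + 1))⁻¹) *
      N ^ (1 - ∏' i : ℕ, (1 - (q ^ (i + 1))⁻¹)) *
      a 1 ^ (∏' i : ℕ, (1 - (q ^ (i + 1))⁻¹)) := by
  have hE := multipliable_eps q hq
  have hP := multipliable_P q t hq ht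
  refine ⟨hE, hP, ?_⟩
  have hE' := hE.hasProd.tendsto_prod_nat
  have hP' := hP.hasProd.tendsto_prod_nat
  have hN' := tendsto_const_nhds (x := N).rpow (hE'.const_sub 1) (Or.inl hN.ne')
  have ha' := tendsto_const_nhds (x := a 1).rpow hE' (Or.inl ha1.ne')
  exact le_of_tendsto_of_tendsto' (hL.comp (Filter.tendsto_add_atTop_nat 1)) ((hP'.mul hN').mul ha')
    (iterate_bound q t N hq ht hN a ha ha1 hrec)
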